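/- Let d ≥ 2, μ > −1, and let n ≥ 0 be an even integer. Then for every polynomial f in d variables of total degree at most n, Σ_{i=1}^d ‖√(1−‖x‖²) ∂_i f‖²_{μ,2} ≤ n(n+2μ+d) ‖f‖²_{μ,2}, and the inequality is sharp: equality is attained by a nonzero polynomial of degree n (for instance any element of 𝒱_n(W_μ, B^d) of the form P(2‖x‖²−1) with P the appropriate Jacobi polynomial of degree n/2). -/

import Mathlib

/-!
Write `I(p) = ∫_{B^d} p W_μ` for polynomials `p`. Since `p (1-‖x‖²)^{μ+1}` vanishes on the sphere,
`I((1-‖x‖²) ∂_i p) = 2(μ+1) I(x_i p)` (`integral_parts`). This relation and the positivity of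
`I(p²)` for `p ≠ 0` are the only analytic facts needed; the rest is algebra.

Let `E = ⟨x, ∇⟩` and `T = -Δ + E² + (2μ+d) E`. The relation implies `I(D_{ij} p) = 0`, and from it
the energy identity (`functional_energy`)
`I(T f · g) = Σ_i I((1-‖x‖²) ∂_i f ∂_i g) + Σ_{i<j} I(D_{ij} f · D_{ij} g)`.
Hence `T` is symmetric and the quadratic form to be bounded is at most `I(T f · f)`.

By Euler's identity, `T` acts on homogeneous polynomials of degree `k` as multiplication by
`k(k+2μ+d)` up to lower degree. Splitting off the component of `f` orthogonal to all polynomials of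
lower degree, induction on the degree gives `I(T f · f) ≤ n(n+2μ+d) I(f²)` (`functional_Tmu_le`).

For `n = 2m`, let `f` be `‖x‖^{2m}` minus its orthogonal projection onto the span of `‖x‖^{2k}`,
`k < m`. The angular terms vanish for radial polynomials, `T` preserves these spans, and
`T f - n(n+2μ+d) f` is orthogonal to `f`, so equality holds (`exists_extremal`).
-/

open MeasureTheory Real MvPolynomial Finset
open scoped ENNReal

noncomputable section

/-- The Euclidean norm of `x ∈ ℝ^d`. -/
def eunorm {d : ℕ} (x : Fin d → ℝ) : ℝ := Real.sqrt (∑ i, (x i) ^ 2)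

/-- The closed unit ball `B^d = {x : ‖x‖ ≤ 1}` in `ℝ^d` (Euclidean norm). -/
def Bd (d : ℕ) : Set (Fin d → ℝ) := {x | eunorm x ≤ 1}

/-- The metric `d_B(x,y) = arccos(⟨x,y⟩ + √(1-‖x‖²)√(1-‖y‖²))` on the unit ball. -/
def distB {d : ℕ} (x y : Fin d → ℝ) : ℝ :=
  Real.arccos ((∑ i, x i * y i) +
    Real.sqrt (1 - eunorm x ^ 2) * Real.sqrt (1 - eunorm y ^ 2))

/-- The metric ball `{y ∈ B^d : d_B(x,y) < r}`. -/
def ballB {d : ℕ} (x : Fin d → ℝ) (r : ℝ) : Set (Fin d → ℝ) :=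
  {y | y ∈ Bd d ∧ distB x y < r}

/-- `W` is a doubling weight on the unit ball `B^d` with respect to the metric `d_B`. -/
def IsDoublingBall (d : ℕ) (W : (Fin d → ℝ) → ℝ) : Prop :=
  ∃ L > (0 : ℝ), ∀ x ∈ Bd d, ∀ r : ℝ, 0 < r →
    ∫ y in ballB x (2 * r), W y ≤ L * ∫ y in ballB x r, W y

/-- The standard simplex `Δ^d = {x : x_i ≥ 0, x_1 + ⋯ + x_d ≤ 1}`. -/
def Td (d : ℕ) : Set (Fin d → ℝ) := {x | (∀ i, 0 ≤ x i) ∧ ∑ i, x i ≤ 1}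

/-- The metric `d_Δ(x,y) = arccos(Σ √(x_i y_i) + √((1-|x|)(1-|y|)))` on the simplex. -/
def distT {d : ℕ} (x y : Fin d → ℝ) : ℝ :=
  Real.arccos ((∑ i, Real.sqrt (x i * y i)) +
    Real.sqrt ((1 - ∑ i, x i) * (1 - ∑ i, y i)))

/-- The metric ball `{y ∈ Δ^d : d_Δ(x,y) < r}`. -/
def ballT {d : ℕ} (x : Fin d → ℝ) (r : ℝ) : Set (Fin d → ℝ) :=
  {y | y ∈ Td d ∧ distT x y < r}

/-- `W` is a doubling weight on the simplex `Δ^d` with respect to the metric `d_Δ`. -/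
def IsDoublingSimplex (d : ℕ) (W : (Fin d → ℝ) → ℝ) : Prop :=
  ∃ L > (0 : ℝ), ∀ x ∈ Td d, ∀ r : ℝ, 0 < r →
    ∫ y in ballT x (2 * r), W y ≤ L * ∫ y in ballT x r, W y

/-- Weighted `L^p` norm on the unit ball: for `p < ∞` it is
`(∫_{B^d} |f|^p W)^{1/p}`, and for `p = ∞` the sup norm on `B^d`. -/
def lpNormB (d : ℕ) (W : (Fin d → ℝ) → ℝ) (p : ℝ≥0∞) (f : (Fin d → ℝ) → ℝ) : ℝ :=
  if p = ⊤ then ⨆ x : Bd d, |f x.1|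
  else (∫ x in Bd d, |f x| ^ p.toReal * W x) ^ (1 / p.toReal)

/-- Weighted `L^p` norm on the simplex: for `p < ∞` it is
`(∫_{Δ^d} |f|^p W)^{1/p}`, and for `p = ∞` the sup norm on `Δ^d`. -/
def lpNormT (d : ℕ) (W : (Fin d → ℝ) → ℝ) (p : ℝ≥0∞) (f : (Fin d → ℝ) → ℝ) : ℝ :=
  if p = ⊤ then ⨆ x : Td d, |f x.1|
  else (∫ x in Td d, |f x| ^ p.toReal * W x) ^ (1 / p.toReal)

/-- Evaluation of a real polynomial in `d` variables at a point of `ℝ^d`. -/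
def evalP {d : ℕ} (f : MvPolynomial (Fin d) ℝ) (x : Fin d → ℝ) : ℝ :=
  MvPolynomial.eval x f

/-- The angular derivative `D_{i,j} = x_i ∂_j − x_j ∂_i` acting on polynomials. -/
def Dpoly {d : ℕ} (i j : Fin d) (f : MvPolynomial (Fin d) ℝ) : MvPolynomial (Fin d) ℝ :=
  X i * pderiv j f - X j * pderiv i f

/-- The classical weight `W_μ(x) = (1−‖x‖²)^μ` on the unit ball. -/
def Wmu (d : ℕ) (μ : ℝ) (x : Fin d → ℝ) : ℝ := (1 - eunorm x ^ 2) ^ μ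

/-- The squared weighted `L²(W_μ, B^d)` norm `‖f‖²_{μ,2} = ∫_{B^d} f² W_μ`. -/
def sqNormMu (d : ℕ) (μ : ℝ) (f : (Fin d → ℝ) → ℝ) : ℝ :=
  ∫ x in Bd d, (f x) ^ 2 * Wmu d μ x

/-- The weighted `L²(W_μ, B^d)` norm `‖f‖_{μ,2}`. -/
def normMu (d : ℕ) (μ : ℝ) (f : (Fin d → ℝ) → ℝ) : ℝ :=
  Real.sqrt (sqNormMu d μ f)

/-- `f ∈ 𝒱_n(W_μ, B^d)`: a polynomial of total degree at most `n`, orthogonal in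
`L²(W_μ, B^d)` to every polynomial of total degree less than `n`. -/
def memV (d : ℕ) (μ : ℝ) (n : ℕ) (f : MvPolynomial (Fin d) ℝ) : Prop :=
  f.totalDegree ≤ n ∧ ∀ g : MvPolynomial (Fin d) ℝ, g.totalDegree < n →
    ∫ x in Bd d, evalP f x * evalP g x * Wmu d μ x = 0

/-- The spectral operator `𝒟_μ` acting on polynomials. -/
def DmuP (d : ℕ) (μ : ℝ) (f : MvPolynomial (Fin d) ℝ) : MvPolynomial (Fin d) ℝ :=
  (∑ i, (1 - X i ^ 2) * pderiv i (pderiv i f))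
    - 2 * (∑ i, ∑ j ∈ Finset.Ioi i, X i * X j * pderiv i (pderiv j f))
    - C ((d : ℝ) + 2 * μ + 1) * ∑ i, X i * pderiv i f

/-- The partial derivative `∂_i` of a function on `ℝ^d`. -/
def pd {d : ℕ} (i : Fin d) (f : (Fin d → ℝ) → ℝ) (x : Fin d → ℝ) : ℝ :=
  fderiv ℝ f x (Pi.single i 1)

/-- `⟨x,∇⟩f(x) = Σ_i x_i ∂_i f(x)`. -/
def xgrad {d : ℕ} (f : (Fin d → ℝ) → ℝ) (x : Fin d → ℝ) : ℝ :=
  ∑ i, x i * pd i f x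

/-- The angular derivative `D_{i,j} = x_i ∂_j − x_j ∂_i` acting on functions. -/
def DijF {d : ℕ} (i j : Fin d) (f : (Fin d → ℝ) → ℝ) (x : Fin d → ℝ) : ℝ :=
  x i * pd j f x - x j * pd i f x

/-- The spectral operator `𝒟_μ` acting on functions. -/
def DmuF (d : ℕ) (μ : ℝ) (f : (Fin d → ℝ) → ℝ) (x : Fin d → ℝ) : ℝ :=
  (∑ i, (1 - x i ^ 2) * pd i (pd i f) x)
    - 2 * (∑ i, ∑ j ∈ Finset.Ioi i, x i * x j * pd i (pd j f) x)
    - ((d : ℝ) + 2 * μ + 1) * ∑ i, x i * pd i f x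



/-! ### Integrals over the ball -/

lemma eunorm_sq {d : ℕ} (x : Fin d → ℝ) : eunorm x ^ 2 = ∑ i, x i ^ 2 :=
  Real.sq_sqrt (Finset.sum_nonneg fun _ _ => sq_nonneg _)

lemma mem_Bd {d : ℕ} (x : Fin d → ℝ) : x ∈ Bd d ↔ ∑ i, x i ^ 2 ≤ 1 := by
  unfold Bd eunorm
  rw [Set.mem_ofPred_eq, Real.sqrt_le_one]

lemma isCompact_Bd (d : ℕ) : IsCompact (Bd d) := by
  have hset : Bd d = {x | ∑ i, x i ^ 2 ≤ 1} := Set.ext fun x => mem_Bd x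
  refine Metric.isCompact_of_isClosed_isBounded ?_ ?_
  · rw [hset]
    exact isClosed_le (by fun_prop) continuous_const
  · refine (Metric.isBounded_closedBall (x := (0 : Fin d → ℝ)) (r := 1)).subset fun x hx => ?_
    rw [mem_closedBall_zero_iff, pi_norm_le_iff_of_nonneg zero_le_one]
    intro i
    rw [Real.norm_eq_abs, ← sq_le_one_iff_abs_le_one]
    exact (Finset.single_le_sum (f := fun i => x i ^ 2) (fun j _ => sq_nonneg _)
      (Finset.mem_univ i)).trans ((mem_Bd x).1 hx)

lemma continuous_evalP {d : ℕ} (p : MvPolynomial (Fin d) ℝ) : Continuous (evalP p) :=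
  MvPolynomial.continuous_eval p

lemma integrableOn_Wmu (d : ℕ) (hd : 2 ≤ d) (μ : ℝ) (hμ : -1 < μ) :
    IntegrableOn (Wmu d μ) (Bd d) := by
  have : Nonempty (Fin d) := ⟨⟨0, by omega⟩⟩
  have hmp := EuclideanSpace.volume_preserving_symm_measurableEquiv_toLp (Fin d)
  -- in polar coordinates the integrand is `y^(d-1) (1-y²)^μ`, singular at most like `(1-y)^μ`
  have h1 : IntegrableOn (fun y : ℝ => y ^ (d - 1) * (1 - y ^ 2) ^ μ) (Set.Ioc 0 1) := by
    have h2 : IntervalIntegrable (fun y : ℝ => (1 - y) ^ μ) volume 0 1 := by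
      have := (intervalIntegral.intervalIntegrable_rpow' (a := 0) (b := 1) hμ).comp_sub_left 1
      simpa using this.symm
    rw [intervalIntegrable_iff_integrableOn_Icc_of_le zero_le_one] at h2
    have h3 : IntegrableOn (fun y : ℝ => (y ^ (d - 1) * (1 + y) ^ μ) * (1 - y) ^ μ)
        (Set.Icc 0 1) := by
      refine h2.continuousOn_mul ?_ isCompact_Icc
      refine (by fun_prop : ContinuousOn (fun y : ℝ => y ^ (d - 1)) _).mul ?_
      refine ContinuousOn.rpow_const (by fun_prop) fun y hy => Or.inl ?_
      have := hy.1
      positivity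
    refine (h3.mono_set Set.Ioc_subset_Icc_self).congr_fun (fun y hy => ?_) measurableSet_Ioc
    have h4 : (1 : ℝ) - y ^ 2 = (1 + y) * (1 - y) := by ring
    simp only
    rw [h4, Real.mul_rpow (by linarith [hy.1]) (by linarith [hy.2])]
    ring
  have h2 : Integrable (fun x : EuclideanSpace ℝ (Fin d) =>
      (Set.Iic (1 : ℝ)).indicator (fun y => (1 - y ^ 2) ^ μ) ‖x‖) := by
    rw [integrable_fun_norm_addHaar volume
      (f := (Set.Iic (1 : ℝ)).indicator (fun y => (1 - y ^ 2) ^ μ))]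
    rw [← integrable_indicator_iff measurableSet_Ioi]
    rw [← integrable_indicator_iff measurableSet_Ioc] at h1
    convert h1 using 1
    funext y
    by_cases h0 : 0 < y <;> by_cases hy : y ≤ 1 <;>
      simp [Set.indicator, h0, hy]
  have h3 : Integrable ((Bd d).indicator (Wmu d μ)) := by
    rw [← hmp.integrable_comp_emb (MeasurableEquiv.measurableEmbedding _)]
    refine h2.congr (Filter.Eventually.of_forall fun x => ?_)
    have hx : eunorm (x.ofLp) = ‖x‖ := by
      simp [eunorm, EuclideanSpace.norm_eq]
    simp only [Function.comp, Set.indicator, Bd, Wmu, Set.mem_ofPred_eq, Set.mem_Iic]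
    simp [hx]
  rwa [integrable_indicator_iff (isCompact_Bd d).measurableSet] at h3

lemma integrableOn_evalP (d : ℕ) (hd : 2 ≤ d) (μ : ℝ) (hμ : -1 < μ)
    (p : MvPolynomial (Fin d) ℝ) : IntegrableOn (fun x => evalP p x * Wmu d μ x) (Bd d) :=
  (integrableOn_Wmu d hd μ hμ).continuousOn_mul (continuous_evalP p).continuousOn (isCompact_Bd d)

/-- `pderiv i` is the derivative along a line in the `i`-th coordinate direction. -/
lemma hasDerivAt_evalP_line {d : ℕ} (p : MvPolynomial (Fin (d + 1)) ℝ) (i : Fin (d + 1))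
    (y : Fin d → ℝ) (t : ℝ) :
    HasDerivAt (fun t => evalP p (i.insertNth t y)) (evalP (pderiv i p) (i.insertNth t y)) t := by
  unfold evalP
  induction p using MvPolynomial.induction_on with
  | C a => simpa using hasDerivAt_const t a
  | add p q hp hq =>
    simp only [map_add]
    exact hp.add hq
  | mul_X p j hp =>
    have hX : HasDerivAt (fun t => (i.insertNth t y : Fin (d + 1) → ℝ) j)
        (MvPolynomial.eval (i.insertNth t y) (pderiv i (X j : MvPolynomial (Fin (d + 1)) ℝ))) t := by
      rcases eq_or_ne j i with rfl | h
      · simp only [Fin.insertNth_apply_same, pderiv_X_self, map_one]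
        exact hasDerivAt_id' t
      · obtain ⟨k, rfl⟩ := Fin.exists_succAbove_eq h
        simpa [pderiv_X_of_ne h] using hasDerivAt_const t (y k)
    have := hp.mul hX
    simp only [map_mul, eval_X, pderiv_mul, map_add]
    exact this

/-- The derivative of `t ↦ q(t) (c - t²)^{μ+1}` integrates to zero over `t² ≤ c`, since the function
vanishes at the end points. -/
lemma integral_line_eq_zero (μ : ℝ) (hμ : -1 < μ) (c : ℝ) (q q' : ℝ → ℝ)
    (hq : ∀ t, HasDerivAt q (q' t) t) :
    ∫ t in {t : ℝ | t ^ 2 ≤ c}, (q' t * (c - t ^ 2) - 2 * (μ + 1) * t * q t) * (c - t ^ 2) ^ μ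
      = 0 := by
  rcases lt_or_ge c 0 with hc | hc
  · have : {t : ℝ | t ^ 2 ≤ c} = ∅ := by
      ext t
      simp only [Set.mem_ofPred_eq, Set.mem_empty_iff_false, iff_false, not_le]
      exact hc.trans_le (sq_nonneg t)
    simp [this]
  have hset : {t : ℝ | t ^ 2 ≤ c} = Set.Icc (-√c) (√c) := by
    ext t
    rw [Set.mem_ofPred_eq, Real.sq_le hc, Set.mem_Icc]
  rw [hset]
  -- a non-integrable function has integral zero by convention
  by_cases hint : IntegrableOn
    (fun t => (q' t * (c - t ^ 2) - 2 * (μ + 1) * t * q t) * (c - t ^ 2) ^ μ)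
      (Set.Icc (-√c) (√c))
  swap
  · exact integral_undef hint
  have hle : -√c ≤ √c := by linarith [Real.sqrt_nonneg c]
  rw [integral_Icc_eq_integral_Ioc, ← intervalIntegral.integral_of_le hle,
    intervalIntegral.integral_eq_sub_of_hasDerivAt_of_le (f := fun t => q t * (c - t ^ 2) ^ (μ + 1))
      hle]
  · have hμ' : μ + 1 ≠ 0 := by linarith
    simp [Real.sq_sqrt hc, Real.zero_rpow hμ']
  · have hqc : Continuous q := continuous_iff_continuousAt.2 fun t => (hq t).continuousAt
    refine (hqc.mul (Continuous.rpow_const (by fun_prop) fun t => Or.inr ?_)).continuousOn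
    linarith
  · intro t ht
    have hpos : 0 < c - t ^ 2 := sub_pos.2 (Real.sq_lt.2 ht)
    have h1 : HasDerivAt (fun t : ℝ => c - t ^ 2) (-(2 * t)) t := by
      simpa using ((hasDerivAt_id t).pow 2).const_sub c
    have h2 := (hq t).mul (h1.rpow_const (p := μ + 1) (Or.inl hpos.ne'))
    refine h2.congr_deriv ?_
    rw [Real.rpow_add_one hpos.ne']
    simp only [add_sub_cancel_right]
    ring
  · rw [intervalIntegrable_iff_integrableOn_Icc_of_le hle]
    exact hint

/-- Integration by parts: `∂_i (p (1-‖x‖²)^{μ+1})` integrates to zero over the ball,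
by Fubini and the one-dimensional fundamental theorem of calculus on each line. -/
lemma integral_parts (d : ℕ) (hd : 2 ≤ d) (μ : ℝ) (hμ : -1 < μ) (i : Fin d)
    (p : MvPolynomial (Fin d) ℝ) :
    ∫ x in Bd d, evalP ((1 - ∑ j, X j ^ 2) * pderiv i p - C (2 * (μ + 1)) * (X i * p)) x
      * Wmu d μ x = 0 := by
  have hint := integrableOn_evalP d hd μ hμ
    ((1 - ∑ j, X j ^ 2) * pderiv i p - C (2 * (μ + 1)) * (X i * p))
  obtain ⟨m, rfl⟩ : ∃ m, d = m + 1 := ⟨d - 1, by omega⟩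
  have hmp := (volume_preserving_piFinSuccAbove (fun _ : Fin (m + 1) => ℝ) i).symm
  have hB := (isCompact_Bd (m + 1)).measurableSet
  rw [← integrable_indicator_iff hB,
    ← hmp.integrable_comp_emb (MeasurableEquiv.measurableEmbedding _)] at hint
  rw [← integral_indicator hB, ← hmp.integral_comp (MeasurableEquiv.measurableEmbedding _)]
  rw [Measure.volume_eq_prod] at hint ⊢
  refine (integral_prod_symm _ hint).trans ?_
  refine integral_eq_zero_of_ae (Filter.Eventually.of_forall fun y => ?_)
  have h := integral_line_eq_zero μ hμ (1 - ∑ k, y k ^ 2)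
    (fun t => evalP p (i.insertNth t y)) _ (hasDerivAt_evalP_line p i y)
  have hms : MeasurableSet {t : ℝ | t ^ 2 ≤ 1 - ∑ k, y k ^ 2} :=
    (isClosed_le (by fun_prop) continuous_const).measurableSet
  rw [← integral_indicator hms] at h
  rw [Pi.zero_apply, ← h]
  refine integral_congr_ae (Filter.Eventually.of_forall fun t => ?_)
  have hs : ∑ j, (i.insertNth t y : Fin (m + 1) → ℝ) j ^ 2 = t ^ 2 + ∑ k, y k ^ 2 := by
    rw [Fin.sum_univ_succAbove _ i]
    simp
  have hmem : (i.insertNth t y : Fin (m + 1) → ℝ) ∈ Bd (m + 1) ↔ t ^ 2 ≤ 1 - ∑ k, y k ^ 2 := by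
    rw [mem_Bd, hs]
    constructor <;> intro h <;> linarith
  have hsub : 1 - (t ^ 2 + ∑ k, y k ^ 2) = 1 - ∑ k, y k ^ 2 - t ^ 2 := by ring
  simp only [Function.comp, MeasurableEquiv.piFinSuccAbove_symm_apply, Fin.insertNthEquiv,
    Equiv.coe_fn_mk, Set.indicator, hmem, Set.mem_ofPred_eq]
  split_ifs
  · simp only [Wmu, eunorm_sq, hs, hsub]
    simp only [evalP, map_sub, map_mul, map_one, map_sum, map_pow, eval_X, eval_C, hs, hsub,
      Fin.insertNth_apply_same]
    ring
  · rfl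

/-! ### Differential operators on polynomials -/

/-- The polynomial `‖x‖²`. -/
def rsq (d : ℕ) : MvPolynomial (Fin d) ℝ := ∑ j, X j ^ 2

/-- The Laplacian on polynomials. -/
def lap (d : ℕ) : MvPolynomial (Fin d) ℝ →ₗ[ℝ] MvPolynomial (Fin d) ℝ :=
  ∑ i, (pderiv i).toLinearMap ∘ₗ (pderiv i).toLinearMap

/-- The Euler operator `⟨x, ∇⟩` on polynomials. -/
def eul (d : ℕ) : MvPolynomial (Fin d) ℝ →ₗ[ℝ] MvPolynomial (Fin d) ℝ :=
  ∑ i, LinearMap.mulLeft ℝ (X i) ∘ₗ (pderiv i).toLinearMap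

/-- The operator `T = -Δ + E² + (2μ+d) E`, with `E` the Euler operator. It equals `-𝒟_μ`. -/
def Tmu (d : ℕ) (μ : ℝ) : MvPolynomial (Fin d) ℝ →ₗ[ℝ] MvPolynomial (Fin d) ℝ :=
  -lap d + eul d ∘ₗ eul d + (2 * μ + d) • eul d

lemma lap_apply (d : ℕ) (f : MvPolynomial (Fin d) ℝ) : lap d f = ∑ i, pderiv i (pderiv i f) := by
  simp [lap, LinearMap.sum_apply]

lemma eul_apply (d : ℕ) (f : MvPolynomial (Fin d) ℝ) : eul d f = ∑ i, X i * pderiv i f := by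
  simp [eul, LinearMap.sum_apply]

lemma Tmu_apply (d : ℕ) (μ : ℝ) (f : MvPolynomial (Fin d) ℝ) :
    Tmu d μ f = -lap d f + eul d (eul d f) + C (2 * μ + d) * eul d f := by
  simp only [Tmu, LinearMap.add_apply, LinearMap.neg_apply, LinearMap.comp_apply,
    LinearMap.smul_apply, smul_eq_C_mul]

lemma pderiv_swap {d : ℕ} (i j : Fin d) (f : MvPolynomial (Fin d) ℝ) :
    pderiv i (pderiv j f) = pderiv j (pderiv i f) := by
  have h : ⁅pderiv (R := ℝ) i, pderiv (R := ℝ) j⁆ = 0 := by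
    refine MvPolynomial.derivation_ext fun k => ?_
    classical
    rw [Derivation.commutator_apply, pderiv_X, pderiv_X, Pi.single_apply, Pi.single_apply]
    split_ifs <;> simp
  have := congrArg (fun D => D f) h
  rw [Derivation.commutator_apply] at this
  exact sub_eq_zero.1 this

lemma Dpoly_Dpoly {d : ℕ} (i j : Fin d) (f : MvPolynomial (Fin d) ℝ) :
    Dpoly i j (Dpoly i j f) = X i ^ 2 * pderiv j (pderiv j f) + X j ^ 2 * pderiv i (pderiv i f)
      - 2 * (X i * (X j * pderiv i (pderiv j f))) - X i * pderiv i f - X j * pderiv j f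
      + if i = j then 2 * (X i * pderiv i f) else 0 := by
  unfold Dpoly
  split_ifs with h
  · subst h
    simp only [sub_self, map_zero, mul_zero]
    ring
  · simp only [map_sub, pderiv_mul, pderiv_X_self, pderiv_X_of_ne h, pderiv_X_of_ne (Ne.symm h),
      pderiv_swap j i]
    ring

/-- The spherical part of the Laplacian: `Σ_{i,j} D_{ij}² = 2 (‖x‖² Δ - E² - (d-2) E)`. -/
lemma sum_Dpoly_Dpoly {d : ℕ} (f : MvPolynomial (Fin d) ℝ) :
    ∑ i, ∑ j, Dpoly i j (Dpoly i j f)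
      = 2 * (rsq d * lap d f - eul d (eul d f) - ((d : MvPolynomial (Fin d) ℝ) - 2) * eul d f) := by
  have hE : eul d (eul d f)
      = eul d f + ∑ i, ∑ j, X i * (X j * pderiv i (pderiv j f)) := by
    rw [eul_apply d (eul d f), eul_apply, ← Finset.sum_add_distrib]
    refine Finset.sum_congr rfl fun i _ => ?_
    rw [map_sum, ← Finset.mul_sum, ← mul_add]
    congr 1
    simp only [pderiv_mul, Finset.sum_add_distrib]
    congr 1
    rw [Finset.sum_eq_single i]
    · simp
    · intro j _ hj
      simp [pderiv_X_of_ne hj]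
    · simp
  have h1 : ∑ i : Fin d, ∑ j : Fin d, X i ^ 2 * pderiv j (pderiv j f) = rsq d * lap d f := by
    rw [rsq, lap_apply, Finset.sum_mul_sum]
  have h2 : ∑ i : Fin d, ∑ j : Fin d, X j ^ 2 * pderiv i (pderiv i f) = rsq d * lap d f := by
    rw [Finset.sum_comm, h1]
  have h3 : ∑ i : Fin d, ∑ _j : Fin d, X i * pderiv i f = d * eul d f := by
    simp [eul_apply, Finset.mul_sum]
  have h4 : ∑ _i : Fin d, ∑ j : Fin d, X j * pderiv j f = d * eul d f := by
    simp [eul_apply, Finset.mul_sum]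
  have h5 : ∑ i : Fin d, ∑ j : Fin d, (if i = j then 2 * (X i * pderiv i f) else 0)
      = 2 * eul d f := by
    simp [eul_apply, Finset.mul_sum]
  have h6 : ∑ i : Fin d, ∑ j : Fin d, 2 * (X i * (X j * pderiv i (pderiv j f)))
      = 2 * ∑ i : Fin d, ∑ j : Fin d, X i * (X j * pderiv i (pderiv j f)) := by
    simp only [Finset.mul_sum]
  simp only [Dpoly_Dpoly, Finset.sum_add_distrib, Finset.sum_sub_distrib, h1, h2, h3, h4, h5, h6]
  rw [hE]
  ring

/-! ### The energy identity -/

/-! In this section `I` is an abstract linear functional on polynomials; the hypothesis `hI` says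
that `∂_i (p (1-‖x‖²)^{μ+1})` has integral zero. -/

section functional

variable {d : ℕ} {μ : ℝ} {I : MvPolynomial (Fin d) ℝ →ₗ[ℝ] ℝ}

lemma functional_C_mul (a : ℝ) (p : MvPolynomial (Fin d) ℝ) : I (C a * p) = a * I p := by
  rw [← smul_eq_C_mul, map_smul, smul_eq_mul]

/-- Angular derivatives integrate to zero: by integration by parts, both `x_i ∂_j p` and
`x_j ∂_i p` have the integral of `(1-‖x‖²) ∂_i ∂_j p`, up to the factor `2(μ+1) ≠ 0`. -/
lemma functional_Dpoly (hμ : -1 < μ)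
    (hI : ∀ i p, I ((1 - rsq d) * pderiv i p - C (2 * (μ + 1)) * (X i * p)) = 0)
    (i j : Fin d) (p : MvPolynomial (Fin d) ℝ) : I (Dpoly i j p) = 0 := by
  have h1 := hI i (pderiv j p)
  have h2 := hI j (pderiv i p)
  rw [pderiv_swap j i] at h2
  have h3 : I (C (2 * (μ + 1)) * Dpoly i j p) = 0 := by
    rw [← sub_zero (0 : ℝ)]
    nth_rewrite 1 [← h2]
    rw [← h1, ← map_sub]
    congr 1
    unfold Dpoly
    ring
  rw [functional_C_mul] at h3
  have : 2 * (μ + 1) ≠ 0 := by linarith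
  exact (mul_eq_zero.1 h3).resolve_left this

lemma functional_Dpoly_mul (hμ : -1 < μ)
    (hI : ∀ i p, I ((1 - rsq d) * pderiv i p - C (2 * (μ + 1)) * (X i * p)) = 0)
    (i j : Fin d) (f g : MvPolynomial (Fin d) ℝ) :
    I (Dpoly i j f * Dpoly i j g) = -I (Dpoly i j (Dpoly i j f) * g) := by
  rw [← add_eq_zero_iff_eq_neg, ← map_add, ← functional_Dpoly hμ hI i j (Dpoly i j f * g)]
  congr 1
  generalize Dpoly i j f = q
  simp only [Dpoly, pderiv_mul]
  ring

/-- Green's formula for `T`: the Bernstein quadratic form plus the angular energy. The factor `2⁻¹`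
accounts for the sum running over ordered pairs `(i, j)`. -/
lemma functional_energy (hμ : -1 < μ)
    (hI : ∀ i p, I ((1 - rsq d) * pderiv i p - C (2 * (μ + 1)) * (X i * p)) = 0)
    (f g : MvPolynomial (Fin d) ℝ) :
    I (Tmu d μ f * g) = ∑ i, I ((1 - rsq d) * (pderiv i f * pderiv i g))
      + 2⁻¹ * ∑ i, ∑ j, I (Dpoly i j f * Dpoly i j g) := by
  have h1 : ∀ i, I ((1 - rsq d) * (pderiv i f * pderiv i g))
      = I ((C (2 * (μ + 1)) * (X i * pderiv i f) - (1 - rsq d) * pderiv i (pderiv i f)) * g) := by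
    intro i
    rw [← sub_eq_zero, ← map_sub, ← hI i (pderiv i f * g), pderiv_mul]
    congr 1
    ring
  have h2 : ∑ i, I ((1 - rsq d) * (pderiv i f * pderiv i g))
      = I ((C (2 * (μ + 1)) * eul d f - (1 - rsq d) * lap d f) * g) := by
    simp only [h1]
    rw [← map_sum, ← Finset.sum_mul, Finset.sum_sub_distrib, ← Finset.mul_sum, ← Finset.mul_sum,
      eul_apply, lap_apply]
  have h3 : ∑ i, ∑ j, I (Dpoly i j f * Dpoly i j g)
      = -I ((∑ i, ∑ j, Dpoly i j (Dpoly i j f)) * g) := by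
    simp only [functional_Dpoly_mul hμ hI, Finset.sum_neg_distrib, ← map_sum, Finset.sum_mul]
  rw [h2, h3, ← map_neg, ← functional_C_mul, ← map_add, sum_Dpoly_Dpoly, Tmu_apply]
  congr 1
  have hC : (C (2⁻¹ : ℝ) : MvPolynomial (Fin d) ℝ) * 2 = 1 := by
    have hC2 : (2 : MvPolynomial (Fin d) ℝ) = C 2 := (map_ofNat C 2).symm
    rw [hC2, ← map_mul]
    norm_num
  have hC1 : (C (2 * μ + d) : MvPolynomial (Fin d) ℝ) =
      C (2 * (μ + 1)) + ((d : MvPolynomial (Fin d) ℝ) - 2) := by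
    have h2 : (2 : MvPolynomial (Fin d) ℝ) = C 2 := (map_ofNat C 2).symm
    have h3 : (d : MvPolynomial (Fin d) ℝ) = C (d : ℝ) := by simp
    rw [h2, h3, ← map_sub, ← map_add]
    congr 1
    ring
  rw [hC1]
  linear_combination ((rsq d * lap d f - eul d (eul d f)
    - ((d : MvPolynomial (Fin d) ℝ) - 2) * eul d f) * g) * hC

lemma functional_Tmu_symm (hμ : -1 < μ)
    (hI : ∀ i p, I ((1 - rsq d) * pderiv i p - C (2 * (μ + 1)) * (X i * p)) = 0)
    (f g : MvPolynomial (Fin d) ℝ) : I (Tmu d μ f * g) = I (f * Tmu d μ g) := by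
  rw [mul_comm f, functional_energy hμ hI, functional_energy hμ hI]
  simp only [mul_comm (pderiv _ g), mul_comm (Dpoly _ _ g)]

/-- Orthogonal projection onto a finite-dimensional space of polynomials. -/
lemma exists_projection (hpos : ∀ p, p ≠ 0 → 0 < I (p * p))
    (U : Submodule ℝ (MvPolynomial (Fin d) ℝ)) [FiniteDimensional ℝ U]
    (f : MvPolynomial (Fin d) ℝ) : ∃ h ∈ U, ∀ u ∈ U, I ((f - h) * u) = 0 := by
  let B : MvPolynomial (Fin d) ℝ →ₗ[ℝ] MvPolynomial (Fin d) ℝ →ₗ[ℝ] ℝ :=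
    (LinearMap.mul ℝ (MvPolynomial (Fin d) ℝ)).compr₂ I
  have hB : ∀ p q, B p q = I (p * q) := fun p q => rfl
  let φ : U →ₗ[ℝ] Module.Dual ℝ U := B.domRestrict₁₂ U U
  have hφ : ∀ p q : U, φ p q = I (p * q) := fun p q => rfl
  have hinj : Function.Injective φ := by
    rw [← LinearMap.ker_eq_bot, LinearMap.ker_eq_bot']
    intro p hp
    by_contra hne
    have h1 := hpos p (fun h => hne (Subtype.ext h))
    rw [← hφ, hp] at h1
    simp at h1
  have hsurj := (LinearMap.injective_iff_surjective_of_finrank_eq_finrank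
    (Subspace.dual_finrank_eq (K := ℝ) (V := U)).symm).1 hinj
  obtain ⟨h, hh⟩ := hsurj ((B f).comp U.subtype)
  refine ⟨h, h.2, fun u hu => ?_⟩
  have h1 := congrArg (fun L => L ⟨u, hu⟩) hh
  have h2 : I (h * u) = I (f * u) := h1
  rw [sub_mul, map_sub, h2, sub_self]

end functional

/-! ### Degrees -/

lemma totalDegree_pderiv_le' {d : ℕ} (i : Fin d) (f : MvPolynomial (Fin d) ℝ) :
    (pderiv i f).totalDegree ≤ f.totalDegree - 1 := by
  refine Finset.sup_le fun m hm => ?_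
  rw [mem_support_iff, coeff_pderiv] at hm
  have h1 := le_totalDegree (mem_support_iff.2 (left_ne_zero_of_mul hm))
  rw [Finsupp.sum_add_index' (by simp) (by simp), Finsupp.sum_single_index rfl] at h1
  omega

lemma mem_deg {d n : ℕ} {f : MvPolynomial (Fin d) ℝ} :
    f ∈ restrictTotalDegree (Fin d) ℝ n ↔ f.totalDegree ≤ n := mem_restrictTotalDegree _ _ _

lemma eul_C (d : ℕ) (a : ℝ) : eul d (C a) = 0 := by simp [eul_apply]

lemma lap_C (d : ℕ) (a : ℝ) : lap d (C a) = 0 := by simp [lap_apply]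

lemma Tmu_C (d : ℕ) (μ a : ℝ) : Tmu d μ (C a) = 0 := by
  simp [Tmu_apply, eul_C, lap_C]

lemma totalDegree_eul_le {d n : ℕ} {f : MvPolynomial (Fin d) ℝ} (hf : f.totalDegree ≤ n) :
    (eul d f).totalDegree ≤ n := by
  rcases Nat.eq_zero_or_pos n with rfl | hn
  · rw [totalDegree_eq_zero_iff_eq_C.1 (Nat.le_zero.1 hf), eul_C]
    simp
  · rw [← mem_deg, eul_apply]
    refine Submodule.sum_mem _ fun i _ => mem_deg.2 ?_
    have h1 := totalDegree_mul (X i) (pderiv i f)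
    have h2 := totalDegree_pderiv_le' i f
    rw [totalDegree_X] at h1
    omega

lemma totalDegree_lap_le {d n : ℕ} {f : MvPolynomial (Fin d) ℝ} (hf : f.totalDegree ≤ n) :
    (lap d f).totalDegree ≤ n - 1 := by
  rw [← mem_deg, lap_apply]
  refine Submodule.sum_mem _ fun i _ => mem_deg.2 ?_
  have h1 := totalDegree_pderiv_le' i f
  have h2 := totalDegree_pderiv_le' i (pderiv i f)
  omega

lemma totalDegree_Tmu_le {d n : ℕ} (μ : ℝ) {f : MvPolynomial (Fin d) ℝ} (hf : f.totalDegree ≤ n) :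
    (Tmu d μ f).totalDegree ≤ n := by
  rw [← mem_deg, Tmu_apply, ← smul_eq_C_mul]
  refine Submodule.add_mem _ (Submodule.add_mem _ (Submodule.neg_mem _ ?_) ?_)
    (Submodule.smul_mem _ _ ?_)
  · exact mem_deg.2 ((totalDegree_lap_le hf).trans (Nat.sub_le _ _))
  · exact mem_deg.2 (totalDegree_eul_le (totalDegree_eul_le hf))
  · exact mem_deg.2 (totalDegree_eul_le hf)

/-- The eigenvalue `k (k + 2μ + d)` of `T` in degree `k`. -/
def lam (d : ℕ) (μ : ℝ) (k : ℕ) : ℝ := k * (k + 2 * μ + d)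

lemma Tmu_homogeneous {d n : ℕ} (μ : ℝ) {f : MvPolynomial (Fin d) ℝ} (hf : f.IsHomogeneous n) :
    Tmu d μ f = lam d μ n • f - lap d f := by
  have hE : eul d f = (n : ℝ) • f := by
    rw [eul_apply, hf.sum_X_mul_pderiv, ← Nat.cast_smul_eq_nsmul ℝ]
  rw [Tmu_apply, hE, map_smul, hE, ← smul_eq_C_mul, smul_smul, smul_smul, lam]
  module

/-- On polynomials of degree at most `n+1`, `T` acts as `lam (n+1)` up to lower degree. -/
lemma totalDegree_Tmu_sub_le {d n : ℕ} (μ : ℝ) {f : MvPolynomial (Fin d) ℝ}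
    (hf : f.totalDegree ≤ n + 1) : (Tmu d μ f - lam d μ (n + 1) • f).totalDegree ≤ n := by
  set f₀ := homogeneousComponent (n + 1) f with hf₀
  have hg : (f - f₀).totalDegree ≤ n := by
    refine Finset.sup_le fun m hm => ?_
    rw [mem_support_iff, coeff_sub, hf₀, coeff_homogeneousComponent] at hm
    split_ifs at hm with h
    · simp at hm
    · rw [sub_zero] at hm
      have h1 := le_totalDegree (mem_support_iff.2 hm)
      have h2 : (m.sum fun _ e => e) = m.degree := rfl
      omega
  have h0 : f₀.IsHomogeneous (n + 1) := homogeneousComponent_isHomogeneous _ _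
  have hdec : Tmu d μ f - lam d μ (n + 1) • f
      = (Tmu d μ (f - f₀) - lam d μ (n + 1) • (f - f₀)) - lap d f₀ := by
    rw [map_sub, Tmu_homogeneous μ h0]
    module
  rw [hdec, ← mem_deg]
  refine Submodule.sub_mem _ (Submodule.sub_mem _ ?_ (Submodule.smul_mem _ _ ?_)) ?_
  · exact mem_deg.2 (totalDegree_Tmu_le μ hg)
  · exact mem_deg.2 hg
  · exact mem_deg.2 (totalDegree_lap_le h0.totalDegree_le)

/-! ### The upper bound -/

/-- Induction on the degree: `T` is symmetric, preserves degree, and acts as `lam n` modulo lower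
degree, so the part of `f` orthogonal to lower degree contributes exactly `lam n`. -/
lemma functional_Tmu_le {d : ℕ} (hd : 2 ≤ d) {μ : ℝ} {I : MvPolynomial (Fin d) ℝ →ₗ[ℝ] ℝ}
    (hμ : -1 < μ) (hI : ∀ i p, I ((1 - rsq d) * pderiv i p - C (2 * (μ + 1)) * (X i * p)) = 0)
    (hpos : ∀ p, p ≠ 0 → 0 < I (p * p)) (n : ℕ) (f : MvPolynomial (Fin d) ℝ)
    (hf : f.totalDegree ≤ n) : I (Tmu d μ f * f) ≤ lam d μ n * I (f * f) := by
  have hnn : ∀ p, 0 ≤ I (p * p) := fun p => by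
    rcases eq_or_ne p 0 with rfl | h
    · simp
    · exact (hpos p h).le
  induction n generalizing f with
  | zero =>
    rw [totalDegree_eq_zero_iff_eq_C.1 (Nat.le_zero.1 hf), Tmu_C]
    simp [lam]
  | succ n ih =>
    -- `f = g + h` with `h` of degree at most `n` and `g` orthogonal to that degree
    obtain ⟨h, hh, horth⟩ := exists_projection hpos (restrictTotalDegree (Fin d) ℝ n) f
    obtain ⟨g, rfl⟩ : ∃ g, f = g + h := ⟨f - h, by ring⟩
    rw [add_sub_cancel_right] at horth
    have hhd := mem_deg.1 hh
    have hg : g.totalDegree ≤ n + 1 := by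
      rw [← mem_deg, ← add_sub_cancel_right g h]
      exact Submodule.sub_mem _ (mem_deg.2 hf) (mem_deg.2 (hhd.trans (Nat.le_succ n)))
    have h1 : I (Tmu d μ g * g) = lam d μ (n + 1) * I (g * g) := by
      have := horth _ (mem_deg.2 (totalDegree_Tmu_sub_le μ hg))
      rw [mul_sub, map_sub, mul_smul_comm, map_smul, smul_eq_mul, mul_comm g (Tmu d μ g)] at this
      linarith
    have h2 : I (Tmu d μ h * g) = 0 := by
      rw [mul_comm]
      exact horth _ (mem_deg.2 (totalDegree_Tmu_le μ hhd))
    have h3 : I (Tmu d μ g * h) = 0 := by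
      rw [functional_Tmu_symm hμ hI, mul_comm, h2]
    have h4 : I (g * h) = 0 := horth h hh
    have h5 : I ((g + h) * (g + h)) = I (g * g) + I (h * h) := by
      have : (g + h) * (g + h) = g * g + h * h + (g * h + g * h) := by ring
      rw [this, map_add, map_add, map_add, h4]
      ring
    have h6 : I (Tmu d μ (g + h) * (g + h)) = I (Tmu d μ g * g) + I (Tmu d μ h * h) := by
      rw [map_add, add_mul, mul_add, mul_add, map_add, map_add, map_add, h2, h3]
      ring
    have hlam : lam d μ n ≤ lam d μ (n + 1) := by
      have : (2 : ℝ) ≤ d := by exact_mod_cast hd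
      have hn : (0 : ℝ) ≤ n := Nat.cast_nonneg n
      unfold lam
      push_cast
      nlinarith
    have h7 := ih h hhd
    have h8 := mul_le_mul_of_nonneg_right hlam (hnn h)
    rw [h5, h6, h1]
    linarith

/-! ### Radial polynomials -/

lemma isHomogeneous_rsq (d : ℕ) : (rsq d).IsHomogeneous 2 :=
  IsHomogeneous.sum _ _ _ fun i _ => by simpa using (isHomogeneous_X ℝ i).pow 2

lemma pderiv_rsq {d : ℕ} (i : Fin d) : pderiv i (rsq d) = 2 * X i := by
  rw [rsq, map_sum, Finset.sum_eq_single i]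
  · simp
  · intro j _ hj
    simp [pderiv_X_of_ne hj]
  · simp

lemma Dpoly_rsq_pow {d : ℕ} (i j : Fin d) (k : ℕ) : Dpoly i j (rsq d ^ k) = 0 := by
  simp only [Dpoly, pderiv_pow, pderiv_rsq]
  ring

lemma lap_rsq_pow (d k : ℕ) :
    lap d (rsq d ^ (k + 1)) = (2 * (k + 1) * (2 * k + d) : ℝ) • rsq d ^ k := by
  have h : ∀ i : Fin d, pderiv i (pderiv i (rsq d ^ (k + 1)))
      = 2 * ((k : MvPolynomial (Fin d) ℝ) + 1) * rsq d ^ k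
        + 4 * ((k : MvPolynomial (Fin d) ℝ) + 1) * (k : MvPolynomial (Fin d) ℝ)
          * rsq d ^ (k - 1) * X i ^ 2 := by
    intro i
    have h2 : (2 : MvPolynomial (Fin d) ℝ) = C 2 := (map_ofNat C 2).symm
    have h3 : ((k : MvPolynomial (Fin d) ℝ) + 1) = C ((k : ℝ) + 1) := by simp
    have h4 : pderiv i (rsq d ^ (k + 1)) = C (2 * ((k : ℝ) + 1)) * (rsq d ^ k * X i) := by
      rw [pderiv_pow, pderiv_rsq, Nat.add_sub_cancel, map_mul, ← h2, ← h3]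
      push_cast
      ring
    rw [h4, pderiv_C_mul, pderiv_mul, pderiv_pow, pderiv_rsq, pderiv_X_self, map_mul, ← h2, ← h3]
    ring
  have hsum : ∑ i : Fin d, (X i ^ 2 : MvPolynomial (Fin d) ℝ) = rsq d := rfl
  have hk : (k : MvPolynomial (Fin d) ℝ) * rsq d ^ (k - 1) * rsq d = k * rsq d ^ k := by
    cases k with
    | zero => simp
    | succ k => rw [Nat.add_sub_cancel, pow_succ]; ring
  rw [lap_apply]
  simp only [h]
  rw [Finset.sum_add_distrib, ← Finset.mul_sum, ← Finset.mul_sum, hsum, smul_eq_C_mul]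
  simp only [Finset.sum_const, Finset.card_univ, Fintype.card_fin, nsmul_eq_mul, map_mul, map_add,
    map_natCast, map_one, map_ofNat]
  linear_combination (4 * ((k : MvPolynomial (Fin d) ℝ) + 1)) * hk

/-- The span of `‖x‖^{2k}`, `k < m`. -/
def radial (d m : ℕ) : Submodule ℝ (MvPolynomial (Fin d) ℝ) :=
  Submodule.span ℝ ((fun k => rsq d ^ k) '' Set.Iio m)

instance (d m : ℕ) : FiniteDimensional ℝ (radial d m) :=
  FiniteDimensional.span_of_finite ℝ ((Set.finite_Iio m).image _)

lemma rsq_pow_mem_radial {d m k : ℕ} (h : k < m) : rsq d ^ k ∈ radial d m :=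
  Submodule.subset_span ⟨k, h, rfl⟩

/-- `T ‖x‖^{2k}` differs from `lam (2k) ‖x‖^{2k}` by a multiple of `‖x‖^{2k-2}`. -/
lemma Tmu_rsq_pow_sub_mem (d : ℕ) (μ : ℝ) (k : ℕ) :
    Tmu d μ (rsq d ^ k) - lam d μ (2 * k) • rsq d ^ k ∈ radial d k := by
  rw [Tmu_homogeneous μ ((isHomogeneous_rsq d).pow k)]
  cases k with
  | zero =>
    have : lap d (1 : MvPolynomial (Fin d) ℝ) = 0 := lap_C d 1
    simp [this]
  | succ k =>
    rw [lap_rsq_pow, sub_sub_cancel_left]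
    exact Submodule.neg_mem _ (Submodule.smul_mem _ _ (rsq_pow_mem_radial (Nat.lt_succ_self k)))

lemma Tmu_mem_radial {d m : ℕ} (μ : ℝ) {f : MvPolynomial (Fin d) ℝ} (hf : f ∈ radial d m) :
    Tmu d μ f ∈ radial d m := by
  have : radial d m ≤ (radial d m).comap (Tmu d μ) := by
    refine Submodule.span_le.2 ?_
    rintro _ ⟨k, hk, rfl⟩
    have hk' : k < m := hk
    have h1 : radial d k ≤ radial d m :=
      Submodule.span_mono (Set.image_mono (Set.Iio_subset_Iio hk'.le))
    have h2 := Submodule.add_mem _ (h1 (Tmu_rsq_pow_sub_mem d μ k))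
      (Submodule.smul_mem _ (lam d μ (2 * k)) (rsq_pow_mem_radial hk'))
    rw [sub_add_cancel] at h2
    exact h2
  exact this hf

lemma Dpoly_radial {d m : ℕ} (i j : Fin d) {f : MvPolynomial (Fin d) ℝ} (hf : f ∈ radial d m) :
    Dpoly i j f = 0 := by
  induction hf using Submodule.span_induction with
  | mem x hx =>
    obtain ⟨k, _, rfl⟩ := hx
    exact Dpoly_rsq_pow i j k
  | zero => simp [Dpoly]
  | add x y _ _ hx hy =>
    unfold Dpoly at *
    rw [map_add, map_add]
    linear_combination hx + hy
  | smul a x _ hx =>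
    unfold Dpoly at *
    rw [Derivation.map_smul, Derivation.map_smul, mul_smul_comm, mul_smul_comm, ← smul_sub, hx, smul_zero]

lemma homogeneousComponent_radial {d m : ℕ} {f : MvPolynomial (Fin d) ℝ} (hf : f ∈ radial d m) :
    homogeneousComponent (2 * m) f = 0 := by
  have : radial d m ≤ LinearMap.ker (homogeneousComponent (R := ℝ) (σ := Fin d) (2 * m)) := by
    refine Submodule.span_le.2 ?_
    rintro _ ⟨k, hk, rfl⟩
    have hk' : k < m := hk
    have h1 := homogeneousComponent_of_mem (m := 2 * m)
      ((mem_homogeneousSubmodule _ _).2 ((isHomogeneous_rsq d).pow k))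
    rw [if_neg (by omega)] at h1
    exact h1
  exact this hf

lemma totalDegree_radial {d m : ℕ} {f : MvPolynomial (Fin d) ℝ} (hf : f ∈ radial d (m + 1)) :
    f.totalDegree ≤ 2 * m := by
  have : radial d (m + 1) ≤ restrictTotalDegree (Fin d) ℝ (2 * m) := by
    refine Submodule.span_le.2 ?_
    rintro _ ⟨k, hk, rfl⟩
    have hk' : k < m + 1 := hk
    exact mem_deg.2 (((isHomogeneous_rsq d).pow k).totalDegree_le.trans (by omega))
  exact mem_deg.1 (this hf)

lemma rsq_ne_zero {d : ℕ} (hd : 2 ≤ d) : rsq d ≠ 0 := by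
  intro h
  have := congrArg (MvPolynomial.eval (fun _ => (1 : ℝ))) h
  simp [rsq] at this
  omega

/-- The extremal radial polynomial: `‖x‖^{2m}` minus its projection onto lower radial powers. -/
lemma exists_extremal {d : ℕ} (hd : 2 ≤ d) {μ : ℝ} {I : MvPolynomial (Fin d) ℝ →ₗ[ℝ] ℝ}
    (hμ : -1 < μ) (hI : ∀ i p, I ((1 - rsq d) * pderiv i p - C (2 * (μ + 1)) * (X i * p)) = 0)
    (hpos : ∀ p, p ≠ 0 → 0 < I (p * p)) (m : ℕ) :
    ∃ f : MvPolynomial (Fin d) ℝ, f ≠ 0 ∧ f.totalDegree = 2 * m ∧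
      ∑ i, I ((1 - rsq d) * (pderiv i f * pderiv i f)) = lam d μ (2 * m) * I (f * f) := by
  obtain ⟨h, hh, horth⟩ := exists_projection hpos (radial d m) (rsq d ^ m)
  set f := rsq d ^ m - h with hf
  have hle : radial d m ≤ radial d (m + 1) :=
    Submodule.span_mono (Set.image_mono (Set.Iio_subset_Iio (Nat.le_succ m)))
  have hmem : f ∈ radial d (m + 1) :=
    Submodule.sub_mem _ (rsq_pow_mem_radial (Nat.lt_succ_self m)) (hle hh)
  have hcomp : homogeneousComponent (2 * m) f = rsq d ^ m := by
    have h1 := homogeneousComponent_of_mem (m := 2 * m)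
      ((mem_homogeneousSubmodule _ _).2 ((isHomogeneous_rsq d).pow m))
    rw [if_pos rfl] at h1
    rw [hf, map_sub, homogeneousComponent_radial hh, h1, sub_zero]
  have hne : rsq d ^ m ≠ 0 := pow_ne_zero _ (rsq_ne_zero hd)
  refine ⟨f, ?_, ?_, ?_⟩
  · intro h0
    rw [h0, map_zero] at hcomp
    exact hne hcomp.symm
  · refine le_antisymm (totalDegree_radial hmem) ?_
    by_contra! hlt
    rw [homogeneousComponent_eq_zero _ _ hlt] at hcomp
    exact hne hcomp.symm
  · have hen := functional_energy hμ hI f f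
    simp only [Dpoly_radial _ _ hmem, mul_zero, map_zero, Finset.sum_const_zero, add_zero] at hen
    rw [← hen]
    -- `T f - lam f` is a combination of lower radial powers, hence orthogonal to `f`
    have h1 : Tmu d μ f - lam d μ (2 * m) • f ∈ radial d m := by
      have : Tmu d μ f - lam d μ (2 * m) • f
          = (Tmu d μ (rsq d ^ m) - lam d μ (2 * m) • rsq d ^ m)
            - (Tmu d μ h - lam d μ (2 * m) • h) := by
        rw [hf, map_sub]
        module
      rw [this]
      exact Submodule.sub_mem _ (Tmu_rsq_pow_sub_mem d μ m)
        (Submodule.sub_mem _ (Tmu_mem_radial μ hh) (Submodule.smul_mem _ _ hh))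
    have h2 := horth _ h1
    rw [mul_sub, map_sub, mul_smul_comm, map_smul, smul_eq_mul, mul_comm f (Tmu d μ f)] at h2
    linarith

/-! ### The integral over the ball as a linear functional -/

/-- Integration of polynomials against `W_μ` over the ball. -/
def ballFunctional (d : ℕ) (hd : 2 ≤ d) (μ : ℝ) (hμ : -1 < μ) :
    MvPolynomial (Fin d) ℝ →ₗ[ℝ] ℝ where
  toFun p := ∫ x in Bd d, evalP p x * Wmu d μ x
  map_add' p q := by
    rw [← integral_add (integrableOn_evalP d hd μ hμ p) (integrableOn_evalP d hd μ hμ q)]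
    simp only [evalP, map_add, add_mul]
  map_smul' a p := by
    simp only [evalP, smul_eval, RingHom.id_apply, smul_eq_mul, mul_assoc, integral_const_mul]

lemma ballFunctional_apply (d : ℕ) (hd : 2 ≤ d) (μ : ℝ) (hμ : -1 < μ)
    (p : MvPolynomial (Fin d) ℝ) :
    ballFunctional d hd μ hμ p = ∫ x in Bd d, evalP p x * Wmu d μ x := rfl

lemma ballFunctional_pos (d : ℕ) (hd : 2 ≤ d) (μ : ℝ) (hμ : -1 < μ)
    (p : MvPolynomial (Fin d) ℝ) (hp : p ≠ 0) : 0 < ballFunctional d hd μ hμ (p * p) := by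
  have hB := (isCompact_Bd d).measurableSet
  have hW : ∀ x ∈ Bd d, 0 ≤ Wmu d μ x := fun x hx => by
    refine Real.rpow_nonneg ?_ _
    rw [eunorm_sq]
    linarith [(mem_Bd x).1 hx]
  -- a nonzero polynomial is nonzero somewhere on a cube inside the ball
  obtain ⟨x₀, hx₀, hpx⟩ : ∃ x₀ : Fin d → ℝ, ∑ i, x₀ i ^ 2 < 1 ∧ evalP p x₀ ≠ 0 := by
    by_contra! hcon
    refine hp (funext_set (fun _ => Set.Ioo (0 : ℝ) (1 / d)) (fun _ => ?_) fun x hx => ?_)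
    · exact Set.Ioo_infinite (by positivity)
    · rw [map_zero]
      refine hcon x ?_
      have hd' : (0 : ℝ) < d := by positivity
      have hdn : Nonempty (Fin d) := ⟨⟨0, by omega⟩⟩
      calc ∑ i, x i ^ 2 < ∑ _i : Fin d, (1 / d : ℝ) := by
            refine Finset.sum_lt_sum_of_nonempty Finset.univ_nonempty fun i _ => ?_
            have hi := hx i (Set.mem_univ i)
            have h1 : (1 / d : ℝ) ≤ 1 := by
              rw [div_le_one hd']
              exact_mod_cast (by omega : 1 ≤ d)
            nlinarith [hi.1, hi.2]
        _ = 1 := by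
            simp [hd'.ne']
  rw [ballFunctional_apply, setIntegral_pos_iff_support_of_nonneg_ae]
  · have hopen : IsOpen {x : Fin d → ℝ | ∑ i, x i ^ 2 < 1 ∧ evalP p x ≠ 0} :=
      (isOpen_lt (f := fun x : Fin d → ℝ => ∑ i, x i ^ 2) (by fun_prop) continuous_const).inter
        (isOpen_ne_fun (continuous_evalP p) continuous_const)
    refine (hopen.measure_pos volume ⟨x₀, hx₀, hpx⟩).trans_le (measure_mono fun x hx => ?_)
    refine ⟨?_, (mem_Bd x).2 hx.1.le⟩
    have h1 : 0 < Wmu d μ x := by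
      refine Real.rpow_pos_of_pos ?_ _
      rw [eunorm_sq]
      linarith [hx.1]
    have h2 : evalP (p * p) x = evalP p x * evalP p x := by simp [evalP]
    rw [Function.mem_support, h2]
    exact mul_ne_zero (mul_ne_zero hx.2 hx.2) h1.ne'
  · refine (ae_restrict_iff' hB).2 (Filter.Eventually.of_forall fun x hx => ?_)
    have h2 : evalP (p * p) x = evalP p x * evalP p x := by simp [evalP]
    simp only [Pi.zero_apply, h2]
    exact mul_nonneg (mul_self_nonneg _) (hW x hx)
  · exact integrableOn_evalP d hd μ hμ _

lemma sqNormMu_evalP (d : ℕ) (hd : 2 ≤ d) (μ : ℝ) (hμ : -1 < μ) (f : MvPolynomial (Fin d) ℝ) :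
    sqNormMu d μ (evalP f) = ballFunctional d hd μ hμ (f * f) := by
  rw [sqNormMu, ballFunctional_apply]
  simp only [evalP, map_mul, sq]

lemma sqNormMu_sqrt_mul (d : ℕ) (hd : 2 ≤ d) (μ : ℝ) (hμ : -1 < μ) (f : MvPolynomial (Fin d) ℝ) :
    sqNormMu d μ (fun x => Real.sqrt (1 - eunorm x ^ 2) * evalP f x)
      = ballFunctional d hd μ hμ ((1 - rsq d) * (f * f)) := by
  rw [sqNormMu, ballFunctional_apply]
  refine setIntegral_congr_fun (isCompact_Bd d).measurableSet fun x hx => ?_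
  have h : 0 ≤ 1 - eunorm x ^ 2 := by
    rw [eunorm_sq]
    linarith [(mem_Bd x).1 hx]
  simp only [mul_pow, Real.sq_sqrt h]
  simp only [eunorm_sq, evalP, rsq, map_mul, map_sub, map_one, map_sum, map_pow, eval_X]
  ring

/-- for even `n`, the sharp `L²(W_μ,B^d)` Bernstein inequality
`Σ_i ‖√(1−‖x‖²) ∂_i f‖²_{μ,2} ≤ n(n+2μ+d)‖f‖²_{μ,2}`, with equality attained by a
nonzero polynomial of degree `n`. -/
theorem stmt3 (d : ℕ) (hd : 2 ≤ d) (μ : ℝ) (hμ : -1 < μ) (n : ℕ) (hn : Even n) :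
    (∀ f : MvPolynomial (Fin d) ℝ, f.totalDegree ≤ n →
      (∑ i, sqNormMu d μ (fun x => Real.sqrt (1 - eunorm x ^ 2) * evalP (pderiv i f) x))
        ≤ (n : ℝ) * ((n : ℝ) + 2 * μ + d) * sqNormMu d μ (evalP f))
    ∧ (∃ f : MvPolynomial (Fin d) ℝ, f ≠ 0 ∧ f.totalDegree = n ∧
      (∑ i, sqNormMu d μ (fun x => Real.sqrt (1 - eunorm x ^ 2) * evalP (pderiv i f) x))
        = (n : ℝ) * ((n : ℝ) + 2 * μ + d) * sqNormMu d μ (evalP f)) := by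
  have hI : ∀ i p, ballFunctional d hd μ hμ
      ((1 - rsq d) * pderiv i p - C (2 * (μ + 1)) * (X i * p)) = 0 :=
    fun i p => integral_parts d hd μ hμ i p
  have hpos := ballFunctional_pos d hd μ hμ
  simp only [sqNormMu_evalP d hd μ hμ, sqNormMu_sqrt_mul d hd μ hμ]
  constructor
  · intro f hf
    refine le_trans ?_ (functional_Tmu_le hd hμ hI hpos n f hf)
    rw [functional_energy hμ hI]
    have h : 0 ≤ ∑ i, ∑ j, ballFunctional d hd μ hμ (Dpoly i j f * Dpoly i j f) := by
      refine Finset.sum_nonneg fun i _ => Finset.sum_nonneg fun j _ => ?_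
      rcases eq_or_ne (Dpoly i j f) 0 with h0 | h0
      · simp [h0]
      · exact (hpos _ h0).le
    linarith
  · obtain ⟨m, rfl⟩ := hn.two_dvd
    exact exists_extremal hd hμ hI hpos m

end
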